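/- The Hilbert cube cannot be separated by a weakly infinite dimensional subset: if S ⊆ Q is weakly infinite dimensional, then Q \ S is a connected subspace of Q. -/

import Mathlib

open Set

/-- A separator between `A` and `B` in a topological space: a closed set `L` whose
complement is the union of two disjoint open sets containing `A` and `B` respectively. -/
def IsSeparator {X : Type*} [TopologicalSpace X] (A B L : Set X) : Prop :=
  IsClosed L ∧ ∃ U V : Set X, IsOpen U ∧ IsOpen V ∧ Disjoint U V ∧
    A ⊆ U ∧ B ⊆ V ∧ Lᶜ = U ∪ V

/-- A family of pairs of sets is essential if every choice of separators has
nonempty intersection. -/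
def IsEssentialFamily {X : Type*} [TopologicalSpace X] {Γ : Type*}
    (A B : Γ → Set X) : Prop :=
  ∀ L : Γ → Set X, (∀ i, IsSeparator (A i) (B i) (L i)) → (⋂ i, L i).Nonempty

/-- A space is strongly infinite dimensional if it admits a countably infinite
essential family of pairs of disjoint closed subsets. -/
def StronglyInfiniteDimensional (X : Type*) [TopologicalSpace X] : Prop :=
  ∃ A B : ℕ → Set X,
    (∀ n, IsClosed (A n) ∧ IsClosed (B n) ∧ Disjoint (A n) (B n)) ∧
    IsEssentialFamily A B

/-- The Hilbert cube `Q = [-1,1]^ℕ`. -/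
abbrev HilbertCube : Type := ℕ → Set.Icc (-1 : ℝ) 1

/-- The negative face `W_i^- = {x ∈ Q : x_i = -1}`. -/
def negFace (i : ℕ) : Set HilbertCube := {x | (x i : ℝ) = -1}

/-- The positive face `W_i^+ = {x ∈ Q : x_i = 1}`. -/
def posFace (i : ℕ) : Set HilbertCube := {x | (x i : ℝ) = 1}

/-!
Let `C i` be sets of vertices of the grid `{0, …, k}^ι` such that `C i` contains the face `x i = 0`
and misses the face `x i = k`. Regard the grid as the discrete torus `(ℤ/(k+1))^ι`, with
coefficients `ℤ/2`. The edges along which membership in `C i` changes, apart from those wrapping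
around in direction `i`, form a cocycle cohomologous to the one formed by all the wrapping edges,
which is dual to a hyperplane. Hence the cup product of these cocycles over all `i` has the same
integral over the torus as the product of the hyperplane classes, which is `1`, and so some unit
cell meets every `C i` and every complement. By compactness the pairs of opposite faces of a cube
`[-1,1]^ι` form an essential family.

If `Q \ S` is not connected, then `S` contains a separator `L` in `Q` of two points `u` and `v`, and
`L` also separates the sets of points agreeing with `u`, respectively `v`, in the first `N`
coordinates. Joining `u` to `v` by a path in these coordinates maps a cube to `Q` and shows that
this pair together with the opposite faces in all further coordinates is essential. As `Q` is
completely normal, separators in `S` of slightly enlarged faces extend to separators of the faces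
in `Q`. Their intersection with `L` is nonempty and lies in `S`, so `S` is strongly infinite
dimensional.
-/

section CubicalCochains

variable {ι A R κ : Type*}

/-- Cubical cochains of mixed degree on an additive monoid `A` with a family of steps `e : ι → A`:
`ω x J` is the value of `ω` on the cube with corner `x` spanned by the steps `e j`, `j ∈ J`. -/
abbrev CubicalCochain (ι A R : Type*) : Type _ := A → Finset ι → R

section Edges

variable [AddCommMonoid A] [CommRing R] {e : ι → A}

/-- The coboundary of a `0`-cochain `b`, as a function of the edges `(x, x + e j)`. -/
def edgeCoboundary (e : ι → A) (b : A → R) (x : A) (j : ι) : R :=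
  b (x + e j) + b x

/-- The condition that a `1`-cochain `α`, where `α x j` is its value on the edge `(x, x + e j)`, is
a cocycle: in characteristic two, `α` sums to zero around each square. -/
def IsEdgeCocycle (e : ι → A) (α : A → ι → R) : Prop :=
  ∀ x j k, α x j + α (x + e j) k = α x k + α (x + e k) j

lemma IsEdgeCocycle.add {α β : A → ι → R} (hα : IsEdgeCocycle e α) (hβ : IsEdgeCocycle e β) :
    IsEdgeCocycle e (α + β) := fun x j k => by
  simp only [Pi.add_apply]
  linear_combination hα x j k + hβ x j k

lemma isEdgeCocycle_edgeCoboundary [CharP R 2] (b : A → R) : IsEdgeCocycle e (edgeCoboundary e b) :=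
  fun x j k => by
    simp only [edgeCoboundary, add_right_comm x (e k)]
    linear_combination CharTwo.add_self_eq_zero (b (x + e j)) -
      CharTwo.add_self_eq_zero (b (x + e k))

end Edges

variable [DecidableEq ι]

section Definitions

variable [AddCommMonoid A] [CommRing R]

/-- The coboundary of a cubical cochain, without signs since coefficients have characteristic
two. -/
def coboundary (e : ι → A) (ω : CubicalCochain ι A R) : CubicalCochain ι A R :=
  fun x J => ∑ j ∈ J, (ω (x + e j) (J.erase j) + ω x (J.erase j))

/-- The cup product `α ∪ ω` of a `1`-cochain `α` with a cubical cochain `ω`. -/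
def edgeCup (e : ι → A) (α : A → ι → R) (ω : CubicalCochain ι A R) : CubicalCochain ι A R :=
  fun x J => ∑ j ∈ J, α x j * ω (x + e j) (J.erase j)

/-- The iterated cup product of the `1`-cochains `α i` for `i` in a list. The empty product is the
constant `0`-cochain `1`. -/
def iteratedCup (e : ι → A) (α : κ → A → ι → R) : List κ → CubicalCochain ι A R
  | [] => fun _ J => if J = ∅ then 1 else 0
  | i :: l => edgeCup e (α i) (iteratedCup e α l)

end Definitions

section Algebra

variable [AddCommMonoid A] [CommRing R] {e : ι → A}

lemma coboundary_add (ω η : CubicalCochain ι A R) :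
    coboundary e (ω + η) = coboundary e ω + coboundary e η := by
  funext x J
  simp only [coboundary, Pi.add_apply, ← Finset.sum_add_distrib]
  exact Finset.sum_congr rfl fun j _ => by ring

lemma edgeCup_add_left (α β : A → ι → R) (ω : CubicalCochain ι A R) :
    edgeCup e (α + β) ω = edgeCup e α ω + edgeCup e β ω := by
  funext x J
  simp only [edgeCup, Pi.add_apply, add_mul, Finset.sum_add_distrib]

lemma edgeCup_add_right (α : A → ι → R) (ω η : CubicalCochain ι A R) :
    edgeCup e α (ω + η) = edgeCup e α ω + edgeCup e α η := by
  funext x J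
  simp only [edgeCup, Pi.add_apply, mul_add, Finset.sum_add_distrib]

lemma edgeCup_zero (α : A → ι → R) : edgeCup e α (0 : CubicalCochain ι A R) = 0 := by
  funext x J
  simp only [edgeCup, Pi.zero_apply, mul_zero, Finset.sum_const_zero]

lemma exists_edge_ne_zero_of_iteratedCup_ne_zero {α : κ → A → ι → R} {l : List κ} {x : A}
    {J : Finset ι} (h : iteratedCup e α l x J ≠ 0) {i : κ} (hi : i ∈ l) :
    ∃ K : Finset ι, ∃ j ∉ K, α i (x + ∑ s ∈ K, e s) j ≠ 0 := by
  suffices ∃ K ⊆ J, ∃ j ∈ J \ K, α i (x + ∑ s ∈ K, e s) j ≠ 0 by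
    obtain ⟨K, -, j, hj, hne⟩ := this
    exact ⟨K, j, (Finset.mem_sdiff.1 hj).2, hne⟩
  induction l generalizing x J with
  | nil => simp at hi
  | cons i' l ih =>
    obtain ⟨s, hs, hne⟩ := Finset.exists_ne_zero_of_sum_ne_zero h
    rcases List.mem_cons.1 hi with rfl | hi
    · exact ⟨∅, Finset.empty_subset _, s, by simpa using hs,
        by simpa using left_ne_zero_of_mul hne⟩
    · obtain ⟨K, hK, j, hj, hKj⟩ := ih (right_ne_zero_of_mul hne) hi
      have hsK : s ∉ K := fun h => Finset.notMem_erase s J (hK h)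
      refine ⟨insert s K, ?_, j, ?_, ?_⟩
      · exact Finset.insert_subset hs (hK.trans (Finset.erase_subset _ _))
      · simp only [Finset.mem_sdiff, Finset.mem_erase, Finset.mem_insert] at hj ⊢
        tauto
      · rwa [Finset.sum_insert hsK, ← add_assoc]

end Algebra

section CharTwo

variable [CommRing R] [CharP R 2]

lemma sum_sum_erase_eq_zero_of_symm (J : Finset ι) {g : ι → ι → R} (hg : ∀ j k, g j k = g k j) :
    ∑ j ∈ J, ∑ k ∈ J.erase j, g j k = 0 := by
  rw [Finset.sum_sigma']
  refine Finset.sum_involution (fun p _ => ⟨p.2, p.1⟩) ?_ ?_ ?_ fun _ _ => rfl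
  · rintro ⟨j, k⟩ -
    rw [hg k j, CharTwo.add_self_eq_zero]
  · rintro ⟨j, k⟩ hjk - heq
    simp only [Finset.mem_sigma, Finset.mem_erase] at hjk
    exact hjk.2.1 (congrArg Sigma.fst heq)
  · rintro ⟨j, k⟩ hjk
    simp only [Finset.mem_sigma, Finset.mem_erase] at hjk ⊢
    exact ⟨hjk.2.2, hjk.2.1.symm, hjk.1⟩

variable [AddCommMonoid A] {e : ι → A}

lemma coboundary_mul (b : A → R) (ω : CubicalCochain ι A R) :
    coboundary e (fun x J => b x * ω x J) =
      edgeCup e (edgeCoboundary e b) ω + fun x J => b x * coboundary e ω x J := by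
  funext x J
  simp only [coboundary, edgeCup, edgeCoboundary, Pi.add_apply, Finset.mul_sum,
    ← Finset.sum_add_distrib]
  refine Finset.sum_congr rfl fun j _ => ?_
  linear_combination -CharTwo.add_self_eq_zero (b x * ω (x + e j) (J.erase j))

lemma coboundary_edgeCup {α : A → ι → R} (hα : IsEdgeCocycle e α) (ω : CubicalCochain ι A R) :
    coboundary e (edgeCup e α ω) = edgeCup e α (coboundary e ω) := by
  funext x J
  have hfar : ∑ j ∈ J, ∑ k ∈ J.erase j,
      (α x j + α (x + e j) k) * ω (x + e j + e k) ((J.erase j).erase k) = 0 :=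
    sum_sum_erase_eq_zero_of_symm J fun j k => by
      rw [hα, add_right_comm, Finset.erase_right_comm]
  have hnear : ∑ j ∈ J, ∑ k ∈ J.erase j, (α x k * ω (x + e k) ((J.erase j).erase k) +
      α x j * ω (x + e j) ((J.erase j).erase k)) = 0 :=
    sum_sum_erase_eq_zero_of_symm J fun j k => by
      rw [add_comm, Finset.erase_right_comm]
  rw [← sub_eq_zero, CharTwo.sub_eq_add]
  refine Eq.trans ?_ ((congrArg₂ (· + ·) hfar hnear).trans (add_zero 0))
  simp only [coboundary, edgeCup, Finset.mul_sum, ← Finset.sum_add_distrib]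
  exact Finset.sum_congr rfl fun j _ => Finset.sum_congr rfl fun k _ => by ring

lemma coboundary_iteratedCup {α : κ → A → ι → R} (hα : ∀ i, IsEdgeCocycle e (α i)) (l : List κ) :
    coboundary e (iteratedCup e α l) = 0 := by
  induction l with
  | nil =>
    funext x J
    exact Finset.sum_eq_zero fun j _ => CharTwo.add_self_eq_zero _
  | cons i l ih => rw [iteratedCup, coboundary_edgeCup (hα i), ih, edgeCup_zero]

lemma edgeCup_edgeCoboundary (b : A → R) {ω : CubicalCochain ι A R} (hω : coboundary e ω = 0) :
    edgeCup e (edgeCoboundary e b) ω = coboundary e fun x J => b x * ω x J := by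
  rw [coboundary_mul, hω]
  funext x J
  simp

lemma exists_iteratedCup_add_edgeCoboundary_eq {α : κ → A → ι → R}
    (hα : ∀ i, IsEdgeCocycle e (α i)) (b : κ → A → R) (l : List κ) :
    ∃ η, iteratedCup e (fun i => α i + edgeCoboundary e (b i)) l =
      iteratedCup e α l + coboundary e η := by
  induction l with
  | nil => exact ⟨0, by funext x J; simp [iteratedCup, coboundary]⟩
  | cons i l ih =>
    obtain ⟨η, hη⟩ := ih
    set ω := iteratedCup e (fun i => α i + edgeCoboundary e (b i)) l
    have hω : coboundary e ω = 0 :=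
      coboundary_iteratedCup (fun i => (hα i).add (isEdgeCocycle_edgeCoboundary (b i))) l
    refine ⟨edgeCup e (α i) η + fun x J => b i x * ω x J, ?_⟩
    calc edgeCup e (α i + edgeCoboundary e (b i)) ω
        = edgeCup e (α i) ω + coboundary e (fun x J => b i x * ω x J) := by
          rw [edgeCup_add_left, edgeCup_edgeCoboundary _ hω]
      _ = edgeCup e (α i) (iteratedCup e α l) + (coboundary e (edgeCup e (α i) η) +
            coboundary e (fun x J => b i x * ω x J)) := by
          rw [coboundary_edgeCup (hα i), ← add_assoc, ← edgeCup_add_right, ← hη]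
      _ = _ := by rw [← coboundary_add]; rfl

end CharTwo

section Sum

variable [AddCommGroup A] [Fintype A] [CommRing R] [CharP R 2] {e : ι → A}

lemma sum_coboundary (η : CubicalCochain ι A R) (J : Finset ι) :
    ∑ x, coboundary e η x J = 0 := by
  simp only [coboundary]
  rw [Finset.sum_comm]
  refine Finset.sum_eq_zero fun j _ => ?_
  have htranslate : ∑ x, η (x + e j) (J.erase j) = ∑ x, η x (J.erase j) :=
    Equiv.sum_comp (Equiv.addRight (e j)) fun x => η x (J.erase j)
  rw [Finset.sum_add_distrib, htranslate, CharTwo.add_self_eq_zero]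

lemma sum_iteratedCup_add_edgeCoboundary {α : κ → A → ι → R} (hα : ∀ i, IsEdgeCocycle e (α i))
    (b : κ → A → R) (l : List κ) (J : Finset ι) :
    ∑ x, iteratedCup e (fun i => α i + edgeCoboundary e (b i)) l x J =
      ∑ x, iteratedCup e α l x J := by
  obtain ⟨η, hη⟩ := exists_iteratedCup_add_edgeCoboundary_eq hα b l
  simp only [hη, Pi.add_apply, Finset.sum_add_distrib, sum_coboundary, add_zero]

end Sum

end CubicalCochains

section Torus

variable {ι R : Type*} [DecidableEq ι] {k : ℕ}

/-- The unit step in direction `j` of the discrete torus `(ℤ/(k+1))^ι`. -/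
abbrev torusStep (k : ℕ) (j : ι) : ι → Fin (k + 1) := Pi.single j 1

/-- The `1`-cocycle on the discrete torus dual to the hyperplane between `x i = k` and `x i = 0`:
it is `1` on the edges that wrap around in direction `i` and `0` on all other edges. -/
def seam (R : Type*) [CommRing R] (i : ι) (x : ι → Fin (k + 1)) (j : ι) : R :=
  if j = i ∧ x i = Fin.last k then 1 else 0

lemma isEdgeCocycle_seam [CommRing R] (i : ι) : IsEdgeCocycle (torusStep k) (seam R i) := by
  intro x j l
  by_cases hj : j = i <;> by_cases hl : l = i <;>
    simp [seam, hj, hl, Ne.symm]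

lemma iteratedCup_seam [CommRing R] {l : List ι} (hl : l.Nodup) (x : ι → Fin (k + 1)) :
    iteratedCup (torusStep k) (seam R) l x l.toFinset =
      if ∀ i ∈ l, x i = Fin.last k then 1 else 0 := by
  induction l generalizing x with
  | nil => simp [iteratedCup]
  | cons i l ih =>
    obtain ⟨hil, hl⟩ := List.nodup_cons.1 hl
    have herase : (i :: l).toFinset.erase i = l.toFinset := by
      rw [List.toFinset_cons, Finset.erase_insert (by simpa using hil)]
    have hstep : ∀ s ∈ l, (x + torusStep k i : ι → Fin (k + 1)) s = x s := fun s hs => by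
      simp [ne_of_mem_of_not_mem hs hil]
    rw [iteratedCup, edgeCup, Finset.sum_eq_single i]
    · rw [herase, ih hl, seam]
      simp only [true_and, List.forall_mem_cons, ite_and, ite_mul, one_mul, zero_mul]
      congr 2
      exact propext (forall₂_congr fun s hs => by rw [hstep s hs])
    · intro j _ hj
      simp [seam, hj]
    · intro hi
      simp at hi

lemma sum_iteratedCup_seam [CommRing R] [Fintype ι] :
    ∑ x, iteratedCup (torusStep k) (seam R) Finset.univ.toList x (Finset.univ : Finset ι) = 1 := by
  have h := fun x : ι → Fin (k + 1) =>
    iteratedCup_seam (R := R) (Finset.nodup_toList (Finset.univ : Finset ι)) x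
  simp only [Finset.toList_toFinset, Finset.mem_toList, Finset.mem_univ, true_imp_iff] at h
  simp only [h, ← funext_iff (g := fun _ => Fin.last k), Finset.sum_ite_eq', Finset.mem_univ,
    if_true]

lemma add_sum_torusStep_apply (x : ι → Fin (k + 1)) (K : Finset ι) (i : ι) :
    (x + ∑ s ∈ K, torusStep k s) i = if i ∈ K then x i + 1 else x i := by
  rw [Pi.add_apply, Finset.sum_apply, Finset.sum_pi_single]
  split_ifs <;> simp

end Torus

section Chessboard

variable {ι : Type*} {k : ℕ}

/-- The vertices of the unit cell of the grid `{0, …, k}^ι` with lower corner `x`. -/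
def cellVertices (x : ι → Fin k) : Set (ι → Fin (k + 1)) :=
  {y | ∀ j, y j = (x j).castSucc ∨ y j = (x j).succ}

/-- A representative of the class of `seam (ZMod 2) i` that marks where membership in `C` changes:
if `C` contains the face `x i = 0` and misses the face `x i = k`, then the edges wrapping around
in direction `i` cancel. -/
noncomputable def frontierEdge [DecidableEq ι] (i : ι) (C : Set (ι → Fin (k + 1))) :
    (ι → Fin (k + 1)) → ι → ZMod 2 :=
  seam (ZMod 2) i + edgeCoboundary (torusStep k) (Cᶜ.indicator 1)

section Frontier

variable [DecidableEq ι] {i : ι} {C : Set (ι → Fin (k + 1))}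

lemma not_wrap_of_frontierEdge_ne_zero (hzero : ∀ y, y i = 0 → y ∈ C)
    (hlast : ∀ y, y i = Fin.last k → y ∉ C) {y : ι → Fin (k + 1)} {j : ι}
    (h : frontierEdge i C y j ≠ 0) : ¬(j = i ∧ y i = Fin.last k) := by
  rintro ⟨rfl, hy⟩
  have hstep : y + torusStep k j ∈ C := hzero _ (by simp [hy])
  exact h (by simp [frontierEdge, seam, edgeCoboundary, hy, hlast y hy, hstep,
    CharTwo.add_self_eq_zero])

lemma mem_iff_notMem_of_frontierEdge_ne_zero (hzero : ∀ y, y i = 0 → y ∈ C)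
    (hlast : ∀ y, y i = Fin.last k → y ∉ C) {y : ι → Fin (k + 1)} {j : ι}
    (h : frontierEdge i C y j ≠ 0) : y ∈ C ↔ y + torusStep k j ∉ C := by
  have hwrap := not_wrap_of_frontierEdge_ne_zero hzero hlast h
  have hb : edgeCoboundary (R := ZMod 2) (torusStep k) (Cᶜ.indicator 1) y j ≠ 0 := by
    simpa [frontierEdge, seam, hwrap] using h
  by_cases hy : y ∈ C <;> by_cases hstep : y + torusStep k j ∈ C <;>
    simp [edgeCoboundary, hy, hstep, CharTwo.add_self_eq_zero] at hb ⊢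

lemma ne_last_of_frontierEdge_ne_zero (hzero : ∀ y, y i = 0 → y ∈ C)
    (hlast : ∀ y, y i = Fin.last k → y ∉ C) {x : ι → Fin (k + 1)} {K : Finset ι} {j : ι}
    (hj : j ∉ K) (h : frontierEdge i C (x + ∑ s ∈ K, torusStep k s) j ≠ 0) :
    x i ≠ Fin.last k := by
  intro hx
  set y := x + ∑ s ∈ K, torusStep k s with hy
  have hyi : y i = if i ∈ K then 0 else Fin.last k := by
    rw [hy, add_sum_torusStep_apply, hx, Fin.last_add_one]
  have hiff := mem_iff_notMem_of_frontierEdge_ne_zero hzero hlast h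
  have hji : j ≠ i := by
    rintro rfl
    exact not_wrap_of_frontierEdge_ne_zero hzero hlast h ⟨rfl, by rw [hyi, if_neg hj]⟩
  have hstep : (y + torusStep k j) i = y i := by simp [hji.symm]
  by_cases hiK : i ∈ K
  · rw [if_pos hiK] at hyi
    exact hiff.1 (hzero y hyi) (hzero _ (hstep.trans hyi))
  · rw [if_neg hiK] at hyi
    exact hlast y hyi (hiff.2 (hlast _ (hstep.trans hyi)))

lemma add_sum_torusStep_mem_cellVertices (x : ι → Fin k) (K : Finset ι) :
    (fun s => (x s).castSucc) + ∑ s ∈ K, torusStep k s ∈ cellVertices x := by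
  intro s
  rw [add_sum_torusStep_apply, Fin.coeSucc_eq_succ]
  split_ifs
  · exact Or.inr rfl
  · exact Or.inl rfl

lemma exists_forall_frontierEdge_ne_zero [Finite ι] (C : ι → Set (ι → Fin (k + 1))) :
    ∃ x, ∀ i, ∃ K : Finset ι, ∃ j ∉ K,
      frontierEdge i (C i) (x + ∑ s ∈ K, torusStep k s) j ≠ 0 := by
  have := Fintype.ofFinite ι
  have hsum : ∑ x, iteratedCup (torusStep k) (fun i => frontierEdge i (C i))
      Finset.univ.toList x Finset.univ = 1 :=
    (sum_iteratedCup_add_edgeCoboundary isEdgeCocycle_seam _ _ _).trans sum_iteratedCup_seam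
  obtain ⟨x, -, hx⟩ := Finset.exists_ne_zero_of_sum_ne_zero (hsum.trans_ne one_ne_zero)
  exact ⟨x, fun i => exists_edge_ne_zero_of_iteratedCup_ne_zero hx
    (Finset.mem_toList.2 (Finset.mem_univ i))⟩

end Frontier

theorem exists_cellVertices_inter_and_diff_nonempty [Finite ι] {C : ι → Set (ι → Fin (k + 1))}
    (hzero : ∀ i y, y i = 0 → y ∈ C i) (hlast : ∀ i y, y i = Fin.last k → y ∉ C i) :
    ∃ x : ι → Fin k, ∀ i, (cellVertices x ∩ C i).Nonempty ∧ (cellVertices x \ C i).Nonempty := by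
  classical
  obtain ⟨x, hx⟩ := exists_forall_frontierEdge_ne_zero C
  choose K j hjK hedge using hx
  have hx_last : ∀ i, x i ≠ Fin.last k := fun i =>
    ne_last_of_frontierEdge_ne_zero (hzero i) (hlast i) (hjK i) (hedge i)
  obtain ⟨x, rfl⟩ : ∃ x' : ι → Fin k, x = fun i => (x' i).castSucc :=
    ⟨fun i => (x i).castPred (hx_last i), by simp⟩
  refine ⟨x, fun i => ?_⟩
  have hiff := mem_iff_notMem_of_frontierEdge_ne_zero (hzero i) (hlast i) (hedge i)
  rw [add_assoc, add_comm (∑ s ∈ K i, _), ← Finset.sum_insert (hjK i)] at hiff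
  have hsource := add_sum_torusStep_mem_cellVertices x (K i)
  have htarget := add_sum_torusStep_mem_cellVertices x (insert (j i) (K i))
  by_cases hmem : (fun s => (x s).castSucc) + ∑ s ∈ K i, torusStep k s ∈ C i
  · exact ⟨⟨_, hsource, hmem⟩, _, htarget, hiff.1 hmem⟩
  · exact ⟨⟨_, htarget, not_not.1 (mt hiff.2 hmem)⟩, _, hsource, hmem⟩

end Chessboard

section Separators

variable {X Y Γ : Type*} [TopologicalSpace X] [TopologicalSpace Y]

lemma isSeparator_compl_union {A B U V : Set X} (hU : IsOpen U) (hV : IsOpen V)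
    (hUV : Disjoint U V) (hAU : A ⊆ U) (hBV : B ⊆ V) : IsSeparator A B (U ∪ V)ᶜ :=
  ⟨(hU.union hV).isClosed_compl, U, V, hU, hV, hUV, hAU, hBV, compl_compl _⟩

lemma IsSeparator.preimage {f : X → Y} (hf : Continuous f) {A B : Set X} {A' B' L : Set Y}
    (hL : IsSeparator A' B' L) (hA : MapsTo f A A') (hB : MapsTo f B B') :
    IsSeparator A B (f ⁻¹' L) := by
  obtain ⟨hLc, U, V, hU, hV, hUV, hAU, hBV, hLUV⟩ := hL
  exact ⟨hLc.preimage hf, f ⁻¹' U, f ⁻¹' V, hU.preimage hf, hV.preimage hf, hUV.preimage f,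
    fun _ hx => hAU (hA hx), fun _ hx => hBV (hB hx), by rw [← preimage_compl, hLUV]; rfl⟩

lemma IsEssentialFamily.of_mapsTo {f : X → Y} (hf : Continuous f) {A B : Γ → Set X}
    {A' B' : Γ → Set Y} (h : IsEssentialFamily A B) (hA : ∀ i, MapsTo f (A i) (A' i))
    (hB : ∀ i, MapsTo f (B i) (B' i)) : IsEssentialFamily A' B' := by
  intro L hL
  obtain ⟨x, hx⟩ := h (fun i => f ⁻¹' L i) fun i => (hL i).preimage hf (hA i) (hB i)
  exact ⟨f x, by rwa [← preimage_iInter] at hx⟩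

lemma isEssentialFamily_of_forall_finset [CompactSpace X] {A B : Γ → Set X}
    (h : ∀ t : Finset Γ, IsEssentialFamily (fun i : t => A i) fun i : t => B i) :
    IsEssentialFamily A B := by
  intro L hL
  refine CompactSpace.iInter_nonempty (fun i => (hL i).1) fun t => ?_
  obtain ⟨x, hx⟩ := h t (fun i => L i) fun i => hL i
  exact ⟨x, mem_iInter₂.2 fun i hi => mem_iInter.1 hx ⟨i, hi⟩⟩

end Separators

section Cube

variable {ι : Type*}

/-- The face `x i = -1` of the cube `[-1,1]^ι`; for `ι = ℕ` this is `negFace i`. -/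
def lowerFace (i : ι) : Set (ι → Icc (-1 : ℝ) 1) := {x | (x i : ℝ) = -1}

/-- The face `x i = 1` of the cube `[-1,1]^ι`; for `ι = ℕ` this is `posFace i`. -/
def upperFace (i : ι) : Set (ι → Icc (-1 : ℝ) 1) := {x | (x i : ℝ) = 1}

/-- The embedding of the grid `{0, …, k}^ι` into the cube `[-1,1]^ι`; for `k = 0` its only value
is the corner `(-1, -1, …)`. -/
noncomputable def gridPoint {k : ℕ} (y : ι → Fin (k + 1)) (i : ι) : Icc (-1 : ℝ) 1 :=
  ⟨2 * ((y i : ℝ) / k) - 1, by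
    have hnonneg : (0 : ℝ) ≤ (y i : ℝ) / k := by positivity
    have hle_one : (y i : ℝ) / k ≤ 1 :=
      div_le_one_of_le₀ (by exact_mod_cast (y i).is_le) (by positivity)
    constructor <;> linarith⟩

lemma gridPoint_mem_lowerFace {k : ℕ} {y : ι → Fin (k + 1)} {i : ι} (hy : y i = 0) :
    gridPoint y ∈ lowerFace i := by
  simp [gridPoint, lowerFace, hy]

lemma gridPoint_mem_upperFace {k : ℕ} (hk : k ≠ 0) {y : ι → Fin (k + 1)} {i : ι}
    (hy : y i = Fin.last k) : gridPoint y ∈ upperFace i := by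
  have hk' : (k : ℝ) ≠ 0 := Nat.cast_ne_zero.2 hk
  simp only [gridPoint, upperFace, hy, mem_ofPred_eq, Fin.val_last, div_self hk']
  norm_num

lemma dist_gridPoint_le [Fintype ι] {k : ℕ} {x : ι → Fin k} {y : ι → Fin (k + 1)}
    (hy : y ∈ cellVertices x) :
    dist (gridPoint y) (gridPoint fun i => (x i).castSucc) ≤ 2 / k := by
  refine (dist_pi_le_iff (by positivity)).2 fun i => ?_
  rw [Subtype.dist_eq, Real.dist_eq]
  rcases hy i with h | h
  · simp only [gridPoint, h, sub_self, abs_zero]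
    positivity
  · have hdiff : 2 * (((x i).succ : ℕ) / (k : ℝ)) - 1 - (2 * (((x i).castSucc : ℕ) / (k : ℝ)) - 1)
        = 2 / k := by
      push_cast [Fin.val_succ, Fin.val_castSucc]
      ring
    simp only [gridPoint, h]
    rw [hdiff, abs_of_nonneg (by positivity)]

lemma isEssentialFamily_faces_of_finite [Finite ι] :
    IsEssentialFamily (lowerFace (ι := ι)) upperFace := by
  have := Fintype.ofFinite ι
  intro L hL
  choose _ U V hU hV hUV hlower hupper hLUV using hL
  by_contra hempty
  have hcover : (univ : Set (ι → Icc (-1 : ℝ) 1)) ⊆ ⋃ s, Sum.elim U V s := by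
    rw [not_nonempty_iff_eq_empty, ← compl_univ_iff, compl_iInter] at hempty
    simp only [← hempty, hLUV, iUnion_sum, Sum.elim_inl, Sum.elim_inr, iUnion_union_distrib,
      subset_rfl]
  obtain ⟨δ, hδ, hball⟩ := lebesgue_number_lemma_of_metric isCompact_univ
    (Sum.forall.2 ⟨hU, hV⟩) hcover
  obtain ⟨k, hk⟩ := exists_nat_gt (2 / δ)
  have hk_pos : (0 : ℝ) < k := (div_pos two_pos hδ).trans hk
  obtain ⟨x, hx⟩ := exists_cellVertices_inter_and_diff_nonempty (k := k)
    (C := fun i => gridPoint ⁻¹' U i)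
    (fun i y hy => hlower i (gridPoint_mem_lowerFace hy))
    (fun i y hy => (hUV i).notMem_of_mem_right
      (hupper i (gridPoint_mem_upperFace (Nat.cast_pos.1 hk_pos).ne' hy)))
  have hcell : ∀ y ∈ cellVertices x,
      gridPoint y ∈ Metric.ball (gridPoint fun i => (x i).castSucc) δ := fun y hy =>
    (dist_gridPoint_le hy).trans_lt (by rwa [div_lt_comm₀ hk_pos hδ])
  obtain ⟨i | i, hi⟩ := hball (gridPoint fun i => (x i).castSucc) (mem_univ _)
  · obtain ⟨y, hy, hyU⟩ := (hx i).2
    exact hyU (hi (hcell y hy))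
  · obtain ⟨y, hy, hyU⟩ := (hx i).1
    exact disjoint_left.1 (hUV i) hyU (hi (hcell y hy))

theorem isEssentialFamily_faces : IsEssentialFamily (lowerFace (ι := ι)) upperFace := by
  classical
  refine isEssentialFamily_of_forall_finset fun t => ?_
  let extend (x : t → Icc (-1 : ℝ) 1) (i : ι) : Icc (-1 : ℝ) 1 :=
    if hi : i ∈ t then x ⟨i, hi⟩ else ⟨0, by norm_num⟩
  have hextend : Continuous extend := continuous_pi fun i => by
    by_cases hi : i ∈ t <;> simp only [extend, hi, dite_true, dite_false] <;> fun_prop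
  refine isEssentialFamily_faces_of_finite.of_mapsTo hextend ?_ ?_ <;>
  · intro i x hx
    simpa [extend, lowerFace, upperFace] using hx

end Cube

section CompletelyNormal

variable {X Γ : Type*} [TopologicalSpace X] {S : Set X}

lemma disjoint_closure_image_val {U V : Set S} (hV : IsOpen V) (hUV : Disjoint U V) :
    Disjoint (closure (Subtype.val '' U)) (Subtype.val '' V) := by
  obtain ⟨O, hO, rfl⟩ := isOpen_induced_iff.1 hV
  have hUO : Disjoint (Subtype.val '' U) O := by
    rwa [disjoint_image_left]
  exact (hUO.closure_left hO).mono_right (image_preimage_subset _ _)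

lemma disjoint_closure_union_image_val {A B A₀ B₀ : Set X} (hA : IsClosed A) (hAB : Disjoint A B)
    (hA₀ : A₀ ⊆ A) (hB₀ : B₀ ⊆ interior B) {U V : Set S} (hV : IsOpen V) (hUV : Disjoint U V)
    (hAU : Subtype.val ⁻¹' A ⊆ U) (hBV : Subtype.val ⁻¹' B ⊆ V) :
    Disjoint (closure (A₀ ∪ Subtype.val '' U)) (B₀ ∪ Subtype.val '' V) := by
  have hcl : closure A₀ ⊆ A := closure_minimal hA₀ hA
  have hAV : Disjoint A (Subtype.val '' V) := disjoint_image_right.2 (hUV.mono_left hAU)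
  have hUB : Disjoint (Subtype.val '' U) (interior B) :=
    (disjoint_image_left.2 (hUV.mono_right hBV)).mono_right interior_subset
  simp only [closure_union, disjoint_union_left, disjoint_union_right]
  exact ⟨⟨hAB.mono hcl (hB₀.trans interior_subset),
    (hUB.closure_left isOpen_interior).mono_right hB₀⟩,
    hAV.mono_left hcl, disjoint_closure_image_val hV hUV⟩

variable [CompletelyNormalSpace X]

lemma IsSeparator.exists_preimage_val_subset {A B A₀ B₀ : Set X} {L : Set S}
    (hL : IsSeparator (Subtype.val ⁻¹' A) (Subtype.val ⁻¹' B) L) (hA : IsClosed A)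
    (hB : IsClosed B) (hAB : Disjoint A B) (hA₀ : A₀ ⊆ interior A) (hB₀ : B₀ ⊆ interior B) :
    ∃ L', IsSeparator A₀ B₀ L' ∧ Subtype.val ⁻¹' L' ⊆ L := by
  obtain ⟨-, U, V, hU, hV, hUV, hAU, hBV, hLUV⟩ := hL
  obtain ⟨U', V', hU', hV', hUU', hVV', hUV'⟩ := separatedNhds_iff_disjoint.2 <| completely_normal
    (disjoint_closure_union_image_val hA hAB (hA₀.trans interior_subset) hB₀ hV hUV hAU hBV)
    (disjoint_closure_union_image_val hB hAB.symm (hB₀.trans interior_subset) hA₀ hU hUV.symm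
      hBV hAU).symm
  obtain ⟨hA₀U', hUU'⟩ := union_subset_iff.1 hUU'
  obtain ⟨hB₀V', hVV'⟩ := union_subset_iff.1 hVV'
  refine ⟨(U' ∪ V')ᶜ, isSeparator_compl_union hU' hV' hUV' hA₀U' hB₀V', ?_⟩
  rw [preimage_compl, compl_subset_comm, hLUV]
  exact union_subset_union (image_subset_iff.1 hUU') (image_subset_iff.1 hVV')

lemma IsEssentialFamily.preimage_val_of_isSeparator_none {A₀ B₀ : Option Γ → Set X}
    (h : IsEssentialFamily A₀ B₀) {L : Set X} (hL : IsSeparator (A₀ none) (B₀ none) L)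
    (hLS : L ⊆ S) {A B : Γ → Set X} (hA : ∀ i, IsClosed (A i)) (hB : ∀ i, IsClosed (B i))
    (hAB : ∀ i, Disjoint (A i) (B i)) (hA₀ : ∀ i, A₀ (some i) ⊆ interior (A i))
    (hB₀ : ∀ i, B₀ (some i) ⊆ interior (B i)) :
    IsEssentialFamily (fun i => (Subtype.val ⁻¹' A i : Set S)) fun i => Subtype.val ⁻¹' B i := by
  intro M hM
  choose M' hM' hM'M using fun i =>
    (hM i).exists_preimage_val_subset (hA i) (hB i) (hAB i) (hA₀ i) (hB₀ i)
  obtain ⟨x, hx⟩ := h (fun o => o.elim L M') (Option.forall.2 ⟨hL, hM'⟩)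
  obtain ⟨hxL, hxM'⟩ := Option.forall.1 (mem_iInter.1 hx)
  exact ⟨⟨x, hLS hxL⟩, mem_iInter.2 fun i => hM'M i (hxM' i)⟩

lemma exists_isSeparator_subset_compl_of_not_isPreconnected (hS : ¬IsPreconnected S) :
    ∃ (u v : X) (L : Set X), IsSeparator {u} {v} L ∧ L ⊆ Sᶜ := by
  rw [isPreconnected_iff_preconnectedSpace, preconnectedSpace_iff_clopen] at hS
  push Not at hS
  obtain ⟨C, hC, ⟨u, hu⟩, hC_univ⟩ := hS
  obtain ⟨v, hv⟩ := nonempty_compl.2 hC_univ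
  obtain ⟨U, V, hU, hV, hCU, hCV, hUV⟩ := separatedNhds_iff_disjoint.2 <| completely_normal
    (disjoint_closure_image_val hC.compl.isOpen disjoint_compl_right)
    (disjoint_closure_image_val hC.isOpen disjoint_compl_left).symm
  refine ⟨u, v, (U ∪ V)ᶜ, isSeparator_compl_union hU hV hUV
    (singleton_subset_iff.2 (hCU ⟨u, hu, rfl⟩)) (singleton_subset_iff.2 (hCV ⟨v, hv, rfl⟩)),
    compl_subset_compl.2 fun x hx => ?_⟩
  by_cases hxC : (⟨x, hx⟩ : S) ∈ C
  · exact Or.inl (hCU ⟨_, hxC, rfl⟩)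
  · exact Or.inr (hCV ⟨_, hxC, rfl⟩)

lemma exists_isSeparator_subset_compl_of_not_isConnected [T2Space X] [Nontrivial X]
    (hS : ¬IsConnected S) : ∃ (u v : X) (L : Set X), IsSeparator {u} {v} L ∧ L ⊆ Sᶜ := by
  rcases S.eq_empty_or_nonempty with rfl | hne
  · obtain ⟨u, v, huv⟩ := exists_pair_ne X
    obtain ⟨U, V, hU, hV, hu, hv, hUV⟩ := t2_separation huv
    exact ⟨u, v, (U ∪ V)ᶜ, isSeparator_compl_union hU hV hUV (singleton_subset_iff.2 hu)
      (singleton_subset_iff.2 hv), by simp⟩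
  · exact exists_isSeparator_subset_compl_of_not_isPreconnected fun h => hS ⟨hne, h⟩

end CompletelyNormal

section HilbertCube

lemma exists_cylinder_subset_of_isOpen {E : ℕ → Type*} [∀ n, TopologicalSpace (E n)]
    {U : Set (∀ n, E n)} (hU : IsOpen U) {x : ∀ n, E n} (hx : x ∈ U) :
    ∃ N, PiNat.cylinder x N ⊆ U := by
  obtain ⟨I, W, hW, hWU⟩ := isOpen_pi_iff.1 hU x hx
  obtain ⟨N, hN⟩ := I.exists_nat_subset_range
  refine ⟨N, fun y hy => hWU fun i hi => ?_⟩
  rw [hy i (Finset.mem_range.1 (hN hi))]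
  exact (hW i hi).2

lemma IsSeparator.exists_cylinder {E : ℕ → Type*} [∀ n, TopologicalSpace (E n)]
    {u v : ∀ n, E n} {L : Set (∀ n, E n)} (hL : IsSeparator {u} {v} L) :
    ∃ N, IsSeparator (PiNat.cylinder u N) (PiNat.cylinder v N) L := by
  obtain ⟨hLc, U, V, hU, hV, hUV, huU, hvV, hLUV⟩ := hL
  obtain ⟨M, hM⟩ := exists_cylinder_subset_of_isOpen hU (singleton_subset_iff.1 huU)
  obtain ⟨N, hN⟩ := exists_cylinder_subset_of_isOpen hV (singleton_subset_iff.1 hvV)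
  exact ⟨max M N, hLc, U, V, hU, hV, hUV, (PiNat.cylinder_anti u (le_max_left M N)).trans hM,
    (PiNat.cylinder_anti v (le_max_right M N)).trans hN, hLUV⟩

lemma exists_continuous_Icc_endpoints {X : Type*} [TopologicalSpace X] [PathConnectedSpace X]
    (u v : X) : ∃ γ : Icc (-1 : ℝ) 1 → X, Continuous γ ∧
      (∀ t : Icc (-1 : ℝ) 1, (t : ℝ) = -1 → γ t = u) ∧
      ∀ t : Icc (-1 : ℝ) 1, (t : ℝ) = 1 → γ t = v := by
  let p := PathConnectedSpace.somePath u v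
  let h := iccHomeoI (-1 : ℝ) 1 (by norm_num)
  refine ⟨fun t => p (h t), p.continuous.comp h.continuous, fun t ht => ?_, fun t ht => ?_⟩
  · have h0 : h t = 0 := Subtype.ext (by simp [h, ht])
    simp only [h0, p.source]
  · have h1 : h t = 1 := Subtype.ext (by norm_num [h, ht])
    simp only [h1, p.target]

theorem isEssentialFamily_cylinder_faces (u v : HilbertCube) (N : ℕ) :
    IsEssentialFamily
      (fun o : Option ℕ => o.elim (PiNat.cylinder u N) fun n => negFace (N + n))
      fun o => o.elim (PiNat.cylinder v N) fun n => posFace (N + n) := by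
  have : PathConnectedSpace (Icc (-1 : ℝ) 1) := isPathConnected_iff_pathConnectedSpace.1
    ((convex_Icc _ _).isPathConnected (nonempty_Icc.2 (by norm_num)))
  choose γ hγ hγu hγv using fun n => exists_continuous_Icc_endpoints (u n) (v n)
  let φ (z : Option ℕ → Icc (-1 : ℝ) 1) : HilbertCube := fun n =>
    if n < N then γ n (z none) else z (some (n - N))
  have hφ : Continuous φ := continuous_pi fun n => by
    by_cases hn : n < N <;> simp only [φ, hn, if_true, if_false] <;> fun_prop
  refine isEssentialFamily_faces.of_mapsTo hφ ?_ ?_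
  · rintro (_ | n) z hz
    · exact fun n hn => (if_pos hn).trans (hγu n _ hz)
    · simpa [φ, negFace, lowerFace] using hz
  · rintro (_ | n) z hz
    · exact fun n hn => (if_pos hn).trans (hγv n _ hz)
    · simpa [φ, posFace, upperFace] using hz

lemma negFace_subset_interior (n : ℕ) :
    negFace n ⊆ interior {x : HilbertCube | (x n : ℝ) ≤ -1 / 2} := by
  intro x (hx : (x n : ℝ) = -1)
  have hcont : Continuous fun y : HilbertCube => (y n : ℝ) := by fun_prop
  exact mem_interior_iff_mem_nhds.2 (hcont.continuousAt.eventually_le_const (by norm_num [hx]))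

lemma posFace_subset_interior (n : ℕ) :
    posFace n ⊆ interior {x : HilbertCube | 1 / 2 ≤ (x n : ℝ)} := by
  intro x (hx : (x n : ℝ) = 1)
  have hcont : Continuous fun y : HilbertCube => (y n : ℝ) := by fun_prop
  exact mem_interior_iff_mem_nhds.2 (hcont.continuousAt.eventually_const_le (by norm_num [hx]))

theorem IsSeparator.stronglyInfiniteDimensional_of_subset {u v : HilbertCube}
    {L S : Set HilbertCube} (hL : IsSeparator {u} {v} L) (hLS : L ⊆ S) :
    StronglyInfiniteDimensional S := by
  obtain ⟨N, hN⟩ := hL.exists_cylinder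
  let A (n : ℕ) : Set HilbertCube := {x | (x (N + n) : ℝ) ≤ -1 / 2}
  let B (n : ℕ) : Set HilbertCube := {x | 1 / 2 ≤ (x (N + n) : ℝ)}
  have hA : ∀ n, IsClosed (A n) := fun n => isClosed_le (by fun_prop) continuous_const
  have hB : ∀ n, IsClosed (B n) := fun n => isClosed_le continuous_const (by fun_prop)
  have hAB : ∀ n, Disjoint (A n) (B n) := fun n => disjoint_left.2
    fun x (hxA : (x (N + n) : ℝ) ≤ -1 / 2) (hxB : 1 / 2 ≤ (x (N + n) : ℝ)) => by linarith
  refine ⟨fun n => Subtype.val ⁻¹' A n, fun n => Subtype.val ⁻¹' B n, fun n =>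
    ⟨(hA n).preimage continuous_subtype_val, (hB n).preimage continuous_subtype_val,
      (hAB n).preimage _⟩, ?_⟩
  exact (isEssentialFamily_cylinder_faces u v N).preimage_val_of_isSeparator_none hN hLS hA hB hAB
    (fun n => negFace_subset_interior (N + n)) fun n => posFace_subset_interior (N + n)

end HilbertCube

/-- The Hilbert cube cannot be separated by a weakly infinite dimensional
subset: if `S ⊆ Q` is weakly infinite dimensional then `Q \ S` is connected. -/
theorem isConnected_compl_of_weaklyInfiniteDimensional
    (S : Set HilbertCube) (hS : ¬ StronglyInfiniteDimensional S) :
    IsConnected (Sᶜ : Set HilbertCube) := by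
  have : Nontrivial (Icc (-1 : ℝ) 1) :=
    ⟨⟨-1, by norm_num⟩, ⟨1, by norm_num⟩, by norm_num [Subtype.ext_iff]⟩
  by_contra hconn
  obtain ⟨u, v, L, hL, hLS⟩ := exists_isSeparator_subset_compl_of_not_isConnected hconn
  exact hS (hL.stronglyInfiniteDimensional_of_subset (compl_compl S ▸ hLS))
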